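/- arXiv:1903.11939 — 2 statements merged into one kernel-verified Lean document; each statement's English description precedes it below -/
import Mathlib

section
/- Let 0 < α < 1, t > 0 and x > 0. Then a_k(x,t) → 0 as k → +∞. -/
open Real MeasureTheory

/-- The Mittag-Leffler function `E_α(r) = ∑ r^k / Γ(1+kα)`. -/
noncomputable def mittagLeffler (α r : ℝ) : ℝ :=
  ∑' k : ℕ, r ^ k / Real.Gamma (1 + k * α)

/-- The coefficients `a_k(x,t)` obtained by splitting the Fourier integral of the
fundamental solution over the intervals where `cos (xξ)` has a fixed sign. -/
noncomputable def aCoeff (α t x : ℝ) (k : ℕ) : ℝ :=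
  if k = 0 then
    ∫ ξ in (0 : ℝ)..(π / (2 * x)),
      mittagLeffler α ((1 - ξ ^ 2) * t ^ α) * Real.cos (x * ξ)
  else
    (-1 : ℝ) ^ k *
      ∫ ξ in (π * (2 * (k : ℝ) - 1) / (2 * x))..(π * (2 * (k : ℝ) + 1) / (2 * x)),
        mittagLeffler α ((1 - ξ ^ 2) * t ^ α) * Real.cos (x * ξ)

open Filter Set Topology

/-- The beta integral over `[0, T]`. -/
theorem integral_rpow_mul_sub_rpow {a b T : ℝ} (ha : 0 < a) (hb : 0 < b) (hT : 0 < T) :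
    ∫ s in (0 : ℝ)..T, s ^ (a - 1) * (T - s) ^ (b - 1) =
      T ^ (a + b - 1) * (Gamma a * Gamma b / Gamma (a + b)) := by
  have hB := Complex.Gamma_mul_Gamma_eq_betaIntegral (s := a) (t := b) (by simpa) (by simpa)
  have hG : Complex.Gamma ((a : ℂ) + b) ≠ 0 := by
    rw [← Complex.ofReal_add, Complex.Gamma_ofReal]
    exact_mod_cast (Gamma_pos_of_pos (add_pos ha hb)).ne'
  have hS := Complex.betaIntegral_scaled (a : ℂ) b hT
  rw [eq_div_of_mul_eq hG ((mul_comm _ _).trans hB.symm), ← Complex.ofReal_add,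
    Complex.Gamma_ofReal, Complex.Gamma_ofReal, Complex.Gamma_ofReal] at hS
  have hc : ∫ s in (0 : ℝ)..T, (s : ℂ) ^ ((a : ℂ) - 1) * ((T : ℂ) - s) ^ ((b : ℂ) - 1) =
      ∫ s in (0 : ℝ)..T, ((s ^ (a - 1) * (T - s) ^ (b - 1) : ℝ) : ℂ) := by
    refine intervalIntegral.integral_congr fun s hs => ?_
    rw [uIcc_of_le hT.le] at hs
    rw [Complex.ofReal_mul, Complex.ofReal_cpow hs.1, Complex.ofReal_cpow (sub_nonneg.2 hs.2)]
    push_cast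
    rfl
  rw [hc, intervalIntegral.integral_ofReal] at hS
  apply Complex.ofReal_injective
  rw [hS, Complex.ofReal_mul, Complex.ofReal_cpow hT.le]
  push_cast
  rfl

theorem intervalIntegrable_rpow_mul_sub_rpow {a b T : ℝ} (ha : 0 < a) (hb : 0 < b)
    (hT : 0 < T) :
    IntervalIntegrable (fun s => s ^ (a - 1) * (T - s) ^ (b - 1)) volume 0 T := by
  apply intervalIntegral.intervalIntegrable_of_integral_ne_zero
  rw [integral_rpow_mul_sub_rpow ha hb hT]
  have := Gamma_pos_of_pos ha
  have := Gamma_pos_of_pos hb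
  have := Gamma_pos_of_pos (add_pos ha hb)
  positivity

theorem exp_neg_mul_rpow_le_Gamma {R y : ℝ} (hR : 0 ≤ R) (hy : 1 ≤ y) :
    exp (-R) * R ^ (y - 1) ≤ Gamma y := by
  have hy0 : 0 < y := by linarith
  have hsub : Ioi R ⊆ Ioi (0 : ℝ) := Ioi_subset_Ioi hR
  have hint := GammaIntegral_convergent hy0
  rw [Gamma_eq_integral hy0, ← integral_exp_neg_Ioi, ← integral_mul_const]
  calc _ ≤ ∫ s in Ioi R, exp (-s) * s ^ (y - 1) := by
        refine setIntegral_mono_on ((integrableOn_exp_neg_Ioi R).mul_const _)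
          (hint.mono_set hsub) measurableSet_Ioi fun s hs => ?_
        have : R ≤ s := le_of_lt hs
        gcongr
    _ ≤ _ := by
        refine setIntegral_mono_set hint ?_ (LE.le.eventuallyLE hsub)
        filter_upwards [ae_restrict_mem measurableSet_Ioi] with s hs
        have : (0 : ℝ) < s := hs
        simp only [Pi.zero_apply]
        positivity

theorem summable_pow_div_Gamma {α β : ℝ} (hα : 0 < α) {r : ℝ} (hr : 0 ≤ r) :
    Summable fun k : ℕ => r ^ k / Gamma (β + k * α) := by
  set R : ℝ := (2 * r + 1) ^ α⁻¹ with hRdef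
  have hR : 0 < R := by positivity
  have hRα : R ^ α = 2 * r + 1 := by
    rw [hRdef, ← rpow_mul (by positivity), inv_mul_cancel₀ hα.ne', rpow_one]
  have hgeo : Summable fun k : ℕ => exp R * R ^ (1 - β) * (r / (2 * r + 1)) ^ k := by
    refine (summable_geometric_of_lt_one (by positivity) ?_).mul_left _
    rw [div_lt_one (by positivity)]
    linarith
  refine hgeo.of_norm_bounded_eventually_nat ?_
  have hlarge : ∀ᶠ k : ℕ in atTop, 1 ≤ β + k * α :=
    (tendsto_atTop_add_const_left _ β
      (tendsto_natCast_atTop_atTop.atTop_mul_const hα)).eventually_ge_atTop 1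
  filter_upwards [hlarge] with k hk
  have hG := exp_neg_mul_rpow_le_Gamma hR.le hk
  have hGpos : 0 < exp (-R) * R ^ (β + k * α - 1) := by positivity
  rw [norm_of_nonneg (div_nonneg (by positivity) (hGpos.le.trans hG))]
  calc r ^ k / Gamma (β + k * α) ≤ r ^ k / (exp (-R) * R ^ (β + k * α - 1)) := by gcongr
    _ = exp R * R ^ (1 - β) * (r / (2 * r + 1)) ^ k := by
      have : R ^ (β + k * α - 1) = (2 * r + 1) ^ k / R ^ (1 - β) := by
        rw [← hRα, ← rpow_mul_natCast hR.le, ← rpow_sub hR]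
        ring_nf
      rw [this, exp_neg, div_pow]
      field_simp

/-- The two-parameter Mittag-Leffler function on the negative half-line,
`r ↦ E_{α,β}(-r) = ∑ (-r)^k / Γ(β+kα)`. -/
noncomputable def mittagLefflerNeg (α β r : ℝ) : ℝ :=
  ∑' k : ℕ, (-r) ^ k / Gamma (β + k * α)

theorem summable_mittagLefflerNeg {α : ℝ} (hα : 0 < α) (β r : ℝ) :
    Summable fun k : ℕ => (-r) ^ k / Gamma (β + k * α) := by
  refine Summable.of_norm ?_
  refine (summable_pow_div_Gamma (β := β) hα (abs_nonneg r)).norm.congr fun k => ?_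
  simp

theorem mittagLefflerNeg_zero (α β : ℝ) : mittagLefflerNeg α β 0 = (Gamma β)⁻¹ := by
  rw [mittagLefflerNeg, tsum_eq_single 0 (by intro k hk; simp [hk])]
  simp

theorem mittagLefflerNeg_eq_sub {α : ℝ} (hα : 0 < α) (β r : ℝ) :
    mittagLefflerNeg α β r = (Gamma β)⁻¹ - r * mittagLefflerNeg α (β + α) r := by
  rw [mittagLefflerNeg, (summable_mittagLefflerNeg hα β r).tsum_eq_zero_add, mittagLefflerNeg,
    ← tsum_mul_left, sub_eq_add_neg, ← tsum_neg]
  congr 1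
  · simp
  · refine tsum_congr fun k => ?_
    rw [show β + ((k + 1 : ℕ) : ℝ) * α = β + α + k * α by push_cast; ring, pow_succ]
    ring

theorem analyticOnNhd_mittagLefflerNeg {α : ℝ} (hα : 0 < α) (β : ℝ) :
    AnalyticOnNhd ℝ (mittagLefflerNeg α β) univ := by
  set p := FormalMultilinearSeries.ofScalars ℝ
    (fun k : ℕ => (-1 : ℝ) ^ k / Gamma (β + k * α)) with hp
  have hrad : p.radius = ⊤ := by
    refine p.radius_eq_top_of_summable_norm fun r => ?_
    refine (summable_pow_div_Gamma (β := β) hα r.coe_nonneg).norm.congr fun k => ?_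
    rw [hp, FormalMultilinearSeries.ofScalars_norm]
    simp
    ring
  have hball := p.hasFPowerSeriesOnBall (by rw [hrad]; simp)
  have hsum : p.sum = mittagLefflerNeg α β := by
    funext r
    rw [hp, ← FormalMultilinearSeries.ofScalarsSum,
      FormalMultilinearSeries.ofScalars_sum_eq, mittagLefflerNeg]
    refine tsum_congr fun k => ?_
    rw [smul_eq_mul, neg_pow]
    ring
  have := hball.analyticOnNhd
  rw [hrad, hsum] at this
  simpa using this

theorem continuous_mittagLefflerNeg {α : ℝ} (hα : 0 < α) (β : ℝ) :
    Continuous (mittagLefflerNeg α β) :=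
  continuousOn_univ.1 (analyticOnNhd_mittagLefflerNeg hα β).continuousOn

theorem intervalIntegrable_mittagLefflerNeg {α β γ T : ℝ} (hα : 0 < α) (hβ : 0 < β)
    (hγ : 0 < γ) (hT : 0 < T) :
    IntervalIntegrable
      (fun s => s ^ (β - 1) * (T - s) ^ (γ - 1) * mittagLefflerNeg α β (s ^ α)) volume 0 T :=
  (intervalIntegrable_rpow_mul_sub_rpow hβ hγ hT).mul_continuousOn
    ((continuous_mittagLefflerNeg hα β).comp (continuous_rpow_const hα.le)).continuousOn

/-- The Riemann-Liouville integral of order `γ` of `s ↦ s^(β-1) E_{α,β}(-s^α)`. -/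
theorem integral_mittagLefflerNeg {α β γ T : ℝ} (hα : 0 < α) (hβ : 0 < β) (hγ : 0 < γ)
    (hT : 0 < T) :
    ∫ s in (0 : ℝ)..T, s ^ (β - 1) * (T - s) ^ (γ - 1) * mittagLefflerNeg α β (s ^ α) =
      Gamma γ * T ^ (β + γ - 1) * mittagLefflerNeg α (β + γ) (T ^ α) := by
  set c : ℕ → ℝ := fun k => (-1) ^ k / Gamma (β + k * α) with hc
  have hβk : ∀ k : ℕ, 0 < β + k * α := fun k => by positivity
  have hval : ∀ k : ℕ, ∫ s in Ioc 0 T, s ^ (β + k * α - 1) * (T - s) ^ (γ - 1) =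
      Gamma γ * T ^ (β + γ - 1) * ((T ^ α) ^ k / Gamma (β + γ + k * α)) * Gamma (β + k * α) := by
    intro k
    rw [← intervalIntegral.integral_of_le hT.le, integral_rpow_mul_sub_rpow (hβk k) hγ hT,
      ← rpow_mul_natCast hT.le, show β + k * α + γ = β + γ + k * α by ring,
      show β + γ + k * α - 1 = (β + γ - 1) + α * k by ring, rpow_add hT]
    ring
  have hint : ∀ k : ℕ, IntegrableOn (fun s => s ^ (β + k * α - 1) * (T - s) ^ (γ - 1)) (Ioc 0 T) :=
    fun k => (intervalIntegrable_iff_integrableOn_Ioc_of_le hT.le).1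
      (intervalIntegrable_rpow_mul_sub_rpow (hβk k) hγ hT)
  have hnorm : ∀ k : ℕ, ∫ s in Ioc 0 T, ‖c k * (s ^ (β + k * α - 1) * (T - s) ^ (γ - 1))‖ =
      Gamma γ * T ^ (β + γ - 1) * ((T ^ α) ^ k / Gamma (β + γ + k * α)) := by
    intro k
    have hG := Gamma_pos_of_pos (hβk k)
    have : ∫ s in Ioc 0 T, ‖c k * (s ^ (β + k * α - 1) * (T - s) ^ (γ - 1))‖ =
        ∫ s in Ioc 0 T, (Gamma (β + k * α))⁻¹ * (s ^ (β + k * α - 1) * (T - s) ^ (γ - 1)) := by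
      refine setIntegral_congr_fun measurableSet_Ioc fun s hs => ?_
      have h1 : 0 ≤ s ^ (β + k * α - 1) * (T - s) ^ (γ - 1) :=
        mul_nonneg (rpow_nonneg hs.1.le _) (rpow_nonneg (sub_nonneg.2 hs.2) _)
      rw [norm_mul, norm_of_nonneg h1, hc]
      simp [abs_of_pos hG]
    rw [this, integral_const_mul, hval]
    field_simp
  have hsum := hasSum_integral_of_summable_integral_norm (fun k => (hint k).const_mul (c k))
    (by
      simp_rw [hnorm]
      exact (summable_pow_div_Gamma hα (by positivity)).mul_left _)
  rw [intervalIntegral.integral_of_le hT.le, mittagLefflerNeg, ← tsum_mul_left]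
  refine Eq.trans ?_ (hsum.tsum_eq.symm.trans (tsum_congr fun k => ?_))
  · refine setIntegral_congr_fun measurableSet_Ioc fun s hs => ?_
    simp only [mittagLefflerNeg]
    rw [← tsum_mul_left]
    refine tsum_congr fun k => ?_
    rw [show β + k * α - 1 = (β - 1) + α * k by ring, rpow_add hs.1, rpow_mul_natCast hs.1.le,
      neg_pow, hc]
    ring
  · have hG := Gamma_pos_of_pos (hβk k)
    rw [integral_const_mul, hval, hc, neg_pow]
    field_simp

/-- The Volterra equation satisfied by `T ↦ T^(β-1) E_{α,β}(-T^α)`. -/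
theorem integral_mittagLefflerNeg_eq {α β T : ℝ} (hα : 0 < α) (hβ : 0 < β) (hT : 0 < T) :
    ∫ s in (0 : ℝ)..T, s ^ (β - 1) * (T - s) ^ (α - 1) * mittagLefflerNeg α β (s ^ α) =
      Gamma α * T ^ (β - 1) * ((Gamma β)⁻¹ - mittagLefflerNeg α β (T ^ α)) := by
  rw [integral_mittagLefflerNeg hα hβ hα hT, mittagLefflerNeg_eq_sub hα β,
    show β + α - 1 = (β - 1) + α by ring, rpow_add hT]
  ring

theorem sub_rpow_le_mul_sub_rpow {α β s T U : ℝ} (hβ : α ≤ β) (hβ1 : β ≤ 1) (hs : 0 ≤ s)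
    (hsT : s < T) (hTU : T ≤ U) :
    (U - s) ^ (α - 1) ≤ (U / T) ^ (β - 1) * (T - s) ^ (α - 1) := by
  have hT : 0 < T := hs.trans_lt hsT
  have hTs : 0 < T - s := sub_pos.2 hsT
  have hUT : 1 ≤ U / T := (one_le_div hT).2 hTU
  have hle : U / T * (T - s) ≤ U - s := by
    rw [mul_sub, div_mul_cancel₀ _ hT.ne']
    nlinarith
  calc (U - s) ^ (α - 1) ≤ (U / T * (T - s)) ^ (α - 1) :=
        rpow_le_rpow_of_nonpos (by positivity) hle (by linarith)
    _ = (U / T) ^ (α - 1) * (T - s) ^ (α - 1) := mul_rpow (by positivity) hTs.le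
    _ ≤ (U / T) ^ (β - 1) * (T - s) ^ (α - 1) := by gcongr

/-- A nonnegative solution of the Volterra equation cannot become negative
on an interval following a zero. -/
theorem mittagLefflerNeg_nonneg_of_zero {α β T U : ℝ} (hα : 0 < α) (hβ : α ≤ β) (hβ1 : β ≤ 1)
    (hT : 0 < T) (hTU : T ≤ U) (hzero : mittagLefflerNeg α β (T ^ α) = 0)
    (hpos : ∀ s, 0 ≤ s → s ≤ T → 0 ≤ mittagLefflerNeg α β (s ^ α))
    (hneg : ∀ s, T ≤ s → s ≤ U → mittagLefflerNeg α β (s ^ α) ≤ 0) :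
    0 ≤ mittagLefflerNeg α β (U ^ α) := by
  have hβ0 : 0 < β := hα.trans_le hβ
  have hU : 0 < U := hT.trans_le hTU
  have hVT := integral_mittagLefflerNeg_eq hα hβ0 hT
  have hVU := integral_mittagLefflerNeg_eq hα hβ0 hU
  have hIT := intervalIntegrable_mittagLefflerNeg hα hβ0 hα hT
  have hIU := intervalIntegrable_mittagLefflerNeg hα hβ0 hα hU
  have hI1 := hIU.mono_set (c := 0) (d := T) (by
    rw [uIcc_of_le hT.le, uIcc_of_le hU.le]; exact Icc_subset_Icc_right hTU)
  have hI2 := hIU.mono_set (c := T) (d := U) (by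
    rw [uIcc_of_le hTU, uIcc_of_le hU.le]; exact Icc_subset_Icc_left hT.le)
  have hfst : ∫ s in (0 : ℝ)..T,
        s ^ (β - 1) * (U - s) ^ (α - 1) * mittagLefflerNeg α β (s ^ α) ≤
      ∫ s in (0 : ℝ)..T, (U / T) ^ (β - 1) *
        (s ^ (β - 1) * (T - s) ^ (α - 1) * mittagLefflerNeg α β (s ^ α)) := by
    refine intervalIntegral.integral_mono_on_of_le_Ioo hT.le hI1 (hIT.const_mul _) fun s hs => ?_
    have h1 := sub_rpow_le_mul_sub_rpow hβ hβ1 hs.1.le hs.2 hTU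
    have h2 := mul_le_mul_of_nonneg_left h1
      (mul_nonneg (rpow_nonneg hs.1.le (β - 1)) (hpos s hs.1.le hs.2.le))
    linarith
  have hsnd : ∫ s in T..U,
      s ^ (β - 1) * (U - s) ^ (α - 1) * mittagLefflerNeg α β (s ^ α) ≤ 0 := by
    rw [intervalIntegral.integral_of_le hTU]
    refine setIntegral_nonpos measurableSet_Ioc fun s hs => ?_
    exact mul_nonpos_of_nonneg_of_nonpos
      (mul_nonneg (rpow_nonneg (hT.trans hs.1).le _) (rpow_nonneg (sub_nonneg.2 hs.2) _))
      (hneg s hs.1.le hs.2)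
  rw [intervalIntegral.integral_const_mul, hVT, hzero, sub_zero, div_rpow hU.le hT.le] at hfst
  rw [← intervalIntegral.integral_add_adjacent_intervals hI1 hI2] at hVU
  have hTβ : 0 < T ^ (β - 1) := by positivity
  have hUβ : 0 < U ^ (β - 1) := by positivity
  have hG := Gamma_pos_of_pos hα
  have hcancel : U ^ (β - 1) / T ^ (β - 1) * (Gamma α * T ^ (β - 1) * (Gamma β)⁻¹) =
      Gamma α * U ^ (β - 1) * (Gamma β)⁻¹ := by
    field_simp
  have hfin : 0 ≤ Gamma α * U ^ (β - 1) * mittagLefflerNeg α β (U ^ α) := by linarith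
  exact nonneg_of_mul_nonneg_right hfin (by positivity)

theorem mittagLefflerNeg_nonneg {α β r : ℝ} (hα : 0 < α) (hβ : α ≤ β) (hβ1 : β ≤ 1)
    (hr : 0 ≤ r) : 0 ≤ mittagLefflerNeg α β r := by
  by_contra! hlt
  have hcont := continuous_mittagLefflerNeg hα β
  have hana := analyticOnNhd_mittagLefflerNeg hα β
  set M := mittagLefflerNeg α β with hM
  have hM0 : 0 < M 0 := by
    rw [hM, mittagLefflerNeg_zero]
    exact inv_pos.2 (Gamma_pos_of_pos (hα.trans_le hβ))
  set S : Set ℝ := {s | 0 ≤ s ∧ M s < 0} with hS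
  have hne : S.Nonempty := ⟨r, hr, hlt⟩
  have hbdd : BddBelow S := ⟨0, fun s hs => hs.1⟩
  set a := sInf S with ha
  have hMa_le : M a ≤ 0 := by
    have hsub : closure S ⊆ {s | M s ≤ 0} :=
      closure_minimal (fun s hs => hs.2.le) (isClosed_le hcont continuous_const)
    exact hsub (csInf_mem_closure hne hbdd)
  have ha0 : 0 < a := by
    refine lt_of_le_of_ne (le_csInf hne fun s hs => hs.1) fun h => ?_
    rw [← h] at hMa_le
    exact hMa_le.not_gt hM0
  have hleft : ∀ s, 0 ≤ s → s ≤ a → 0 ≤ M s := by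
    have hsub : closure (Ico 0 a) ⊆ {s | 0 ≤ M s} := by
      refine closure_minimal (fun s hs => ?_) (isClosed_le continuous_const hcont)
      exact not_lt.1 fun h => hs.2.not_ge (csInf_le hbdd ⟨hs.1, h⟩)
    rw [closure_Ico ha0.ne] at hsub
    exact fun s h0 h1 => hsub ⟨h0, h1⟩
  have hMa : M a = 0 := le_antisymm hMa_le (hleft a ha0.le le_rfl)
  have hisol : ∀ᶠ s in 𝓝[≠] a, M s ≠ 0 := by
    refine (hana a (mem_univ a)).eventually_eq_zero_or_eventually_ne_zero.resolve_left fun h => ?_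
    have := hana.eqOn_zero_of_preconnected_of_eventuallyEq_zero isPreconnected_univ
      (mem_univ a) h (mem_univ 0)
    exact hM0.ne' this
  rw [eventually_nhdsWithin_iff, Metric.eventually_nhds_iff] at hisol
  obtain ⟨ε, hε, hisol⟩ := hisol
  obtain ⟨b, hbS, hb⟩ := exists_lt_of_csInf_lt hne (lt_add_of_pos_right a hε)
  have hab : a < b := by
    refine lt_of_le_of_ne (csInf_le hbdd hbS) fun h => ?_
    exact hbS.2.ne (h ▸ hMa)
  have hright : ∀ s, a ≤ s → s ≤ b → M s ≤ 0 := by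
    intro s has hsb
    by_contra! hpos
    obtain ⟨z, hz, hz0⟩ := intermediate_value_Icc' hsb hcont.continuousOn ⟨hbS.2.le, hpos.le⟩
    have hsa : s ≠ a := fun h => hpos.ne' (h ▸ hMa)
    have haz : a < z := (lt_of_le_of_ne has hsa.symm).trans_le hz.1
    refine hisol (y := z) ?_ haz.ne' hz0
    rw [Real.dist_eq, abs_of_pos (sub_pos.2 haz)]
    linarith [hz.2]
  have hb0 : 0 < b := ha0.trans hab
  have hinv : ∀ {y : ℝ}, 0 < y → (y ^ α⁻¹) ^ α = y := fun hy => rpow_inv_rpow hy.le hα.ne'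
  have hfin := mittagLefflerNeg_nonneg_of_zero hα hβ hβ1 (T := a ^ α⁻¹) (U := b ^ α⁻¹)
    (by positivity) (by gcongr) (by rw [hinv ha0]; exact hMa)
    (fun s h0 hs => hleft _ (by positivity) ?_) (fun s h0 hs => hright _ ?_ ?_)
  · rw [hinv hb0] at hfin
    exact hfin.not_gt hbS.2
  · rw [← hinv ha0]
    gcongr
  · rw [← hinv ha0]
    gcongr
  · have : 0 ≤ s := le_trans (by positivity) h0
    rw [← hinv hb0]
    gcongr

theorem mittagLefflerNeg_one_antitone {α S T : ℝ} (hα : 0 < α) (hα1 : α ≤ 1) (hS : 0 < S)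
    (hST : S ≤ T) : mittagLefflerNeg α 1 (T ^ α) ≤ mittagLefflerNeg α 1 (S ^ α) := by
  have key : ∀ U : ℝ, 0 < U → mittagLefflerNeg α 1 (U ^ α) =
      1 - ∫ s in (0 : ℝ)..U, s ^ (α - 1) * mittagLefflerNeg α α (s ^ α) := by
    intro U hU
    have h := integral_mittagLefflerNeg hα hα one_pos hU
    simp only [sub_self, rpow_zero, mul_one, Gamma_one, one_mul, add_sub_cancel_right] at h
    rw [h, mittagLefflerNeg_eq_sub hα, Gamma_one, inv_one, add_comm 1 α]
  have hint : ∀ U : ℝ, 0 < U → IntervalIntegrable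
      (fun s => s ^ (α - 1) * mittagLefflerNeg α α (s ^ α)) volume 0 U := by
    intro U hU
    simpa using intervalIntegrable_mittagLefflerNeg hα hα one_pos hU
  have hT : 0 < T := hS.trans_le hST
  have hdiff := intervalIntegral.integral_interval_sub_left (hint T hT) (hint S hS)
  have hnonneg : 0 ≤ ∫ s in S..T, s ^ (α - 1) * mittagLefflerNeg α α (s ^ α) := by
    refine intervalIntegral.integral_nonneg hST fun s hs => ?_
    have hs0 : 0 ≤ s := hS.le.trans hs.1
    exact mul_nonneg (rpow_nonneg hs0 _)
      (mittagLefflerNeg_nonneg hα le_rfl hα1 (rpow_nonneg hs0 _))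
  rw [key T hT, key S hS]
  linarith

theorem mittagLefflerNeg_one_le {α r : ℝ} (hα : 0 < α) (hα1 : α ≤ 1) (hr : 0 < r) :
    mittagLefflerNeg α 1 r ≤ Gamma (1 + α) / r := by
  set T := r ^ α⁻¹ with hTdef
  have hT : 0 < T := by positivity
  have hTα : T ^ α = r := rpow_inv_rpow hr.le hα.ne'
  have hV := integral_mittagLefflerNeg_eq hα one_pos hT
  have hB := integral_rpow_mul_sub_rpow one_pos hα hT
  have hle : (∫ s in (0 : ℝ)..T, s ^ ((1 : ℝ) - 1) * (T - s) ^ (α - 1)) *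
        mittagLefflerNeg α 1 (T ^ α) ≤
      ∫ s in (0 : ℝ)..T, s ^ ((1 : ℝ) - 1) * (T - s) ^ (α - 1) * mittagLefflerNeg α 1 (s ^ α) := by
    rw [← intervalIntegral.integral_mul_const]
    refine intervalIntegral.integral_mono_on_of_le_Ioo hT.le
      ((intervalIntegrable_rpow_mul_sub_rpow one_pos hα hT).mul_const _)
      (intervalIntegrable_mittagLefflerNeg hα one_pos hα hT) fun s hs => ?_
    exact mul_le_mul_of_nonneg_left (mittagLefflerNeg_one_antitone hα hα1 hs.1 hs.2.le)
      (mul_nonneg (rpow_nonneg hs.1.le _) (rpow_nonneg (sub_nonneg.2 hs.2.le) _))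
  have h0 : 0 ≤ mittagLefflerNeg α 1 r := mittagLefflerNeg_nonneg hα hα1 le_rfl hr.le
  have hG := Gamma_pos_of_pos hα
  have hG1 : 0 < Gamma (1 + α) := Gamma_pos_of_pos (by linarith)
  rw [hB, hV, add_sub_cancel_left, hTα, sub_self, rpow_zero, Gamma_one, inv_one] at hle
  have hle' : Gamma α * (r * mittagLefflerNeg α 1 r / Gamma (1 + α)) ≤ Gamma α * 1 := by
    have : 0 ≤ Gamma α * mittagLefflerNeg α 1 r := by positivity
    calc _ = r * (1 * Gamma α / Gamma (1 + α)) * mittagLefflerNeg α 1 r := by ring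
      _ ≤ _ := by linarith
  have h1 := (div_le_one hG1).1 (le_of_mul_le_mul_left hle' hG)
  rw [le_div_iff₀ hr]
  linarith

theorem tendsto_mittagLeffler_atBot {α : ℝ} (hα : 0 < α) (hα1 : α ≤ 1) :
    Tendsto (mittagLeffler α) atBot (𝓝 0) := by
  have h : Tendsto (mittagLefflerNeg α 1) atTop (𝓝 0) := by
    refine tendsto_of_tendsto_of_tendsto_of_le_of_le' tendsto_const_nhds
      (tendsto_const_nhds.div_atTop tendsto_id) ?_ ?_ (h := fun r => Gamma (1 + α) / r)
    · filter_upwards [eventually_ge_atTop 0] with r hr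
      exact mittagLefflerNeg_nonneg hα hα1 le_rfl hr
    · filter_upwards [eventually_gt_atTop 0] with r hr
      exact mittagLefflerNeg_one_le hα hα1 hr
  refine (h.comp tendsto_neg_atBot_atTop).congr fun r => ?_
  simp [mittagLefflerNeg, mittagLeffler]

theorem aCoeff_tendsto_zero (α t x : ℝ) (hα : 0 < α) (hα1 : α < 1) (ht : 0 < t)
    (hx : 0 < x) :
    Filter.Tendsto (fun k : ℕ => aCoeff α t x k) Filter.atTop (nhds 0) := by
  have htα : 0 < t ^ α := rpow_pos_of_pos ht α
  have hsymbol : Tendsto (fun ξ : ℝ => mittagLeffler α ((1 - ξ ^ 2) * t ^ α)) atTop (𝓝 0) := by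
    refine (tendsto_mittagLeffler_atBot hα hα1.le).comp (Tendsto.atBot_mul_const htα ?_)
    exact tendsto_atBot_add_const_left _ 1
      (tendsto_neg_atTop_atBot.comp (tendsto_pow_atTop two_ne_zero))
  have hend : Tendsto (fun k : ℕ => π * (2 * (k : ℝ) - 1) / (2 * x)) atTop atTop := by
    refine Tendsto.atTop_div_const (by positivity) (Tendsto.const_mul_atTop pi_pos ?_)
    exact tendsto_atTop_add_const_right _ (-1)
      (tendsto_natCast_atTop_atTop.const_mul_atTop two_pos)
  rw [Metric.tendsto_nhds]
  intro ε hε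
  set δ := ε * x / (2 * π) with hδ
  have hδ0 : 0 < δ := by positivity
  obtain ⟨B, hB⟩ := eventually_atTop.1 (Metric.tendsto_nhds.1 hsymbol δ hδ0)
  filter_upwards [hend.eventually_ge_atTop B, eventually_ge_atTop 1] with k hkB hk
  have hle : π * (2 * (k : ℝ) - 1) / (2 * x) ≤ π * (2 * (k : ℝ) + 1) / (2 * x) := by
    gcongr
    linarith
  have hbound := intervalIntegral.norm_integral_le_of_norm_le_const
    (a := π * (2 * (k : ℝ) - 1) / (2 * x)) (b := π * (2 * (k : ℝ) + 1) / (2 * x)) (C := δ)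
    (f := fun ξ => mittagLeffler α ((1 - ξ ^ 2) * t ^ α) * Real.cos (x * ξ)) (fun ξ hξ => by
      rw [uIoc_of_le hle] at hξ
      have h1 := hB ξ (hkB.trans hξ.1.le)
      rw [dist_zero_right] at h1
      rw [norm_mul]
      exact (mul_le_of_le_one_right (norm_nonneg _) (abs_cos_le_one _)).trans h1.le)
  have hlen : π * (2 * (k : ℝ) + 1) / (2 * x) - π * (2 * (k : ℝ) - 1) / (2 * x) = π / x := by
    field_simp
    ring
  rw [hlen, abs_of_pos (by positivity),
    show δ * (π / x) = ε / 2 by rw [hδ]; field_simp] at hbound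
  rw [dist_zero_right, aCoeff, if_neg (by omega), norm_mul, norm_pow, norm_neg, norm_one,
    one_pow, one_mul]
  linarith
end

section
/- Let 0 < α < 1, t > 0, a ≥ 0, d > 0 and let N ∈ {2,3}. Then ∫_{ℝ^N} E_α((a − 4π² d |ξ|²) t^α) dξ = +∞; that is, the (everywhere positive) function ξ ↦ E_α((a − 4π² d |ξ|²) t^α) is not integrable on ℝ^N. In particular, the fundamental solution u satisfies u(0,t) = +∞ for all t > 0. -/
open Real MeasureTheory

open Set

lemma rpow_mul_exp_neg_le_Gamma {M y : ℝ} (hM : 0 < M) (hy : 0 ≤ y) :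
    M ^ y * exp (-M) ≤ Real.Gamma (1 + y) := by
  have hconv := Real.GammaIntegral_convergent (s := 1 + y) (by linarith)
  have hsub : Ioi M ⊆ Ioi 0 := Ioi_subset_Ioi hM.le
  rw [Real.Gamma_eq_integral (by linarith), ← integral_exp_neg_Ioi, ← integral_const_mul]
  refine le_trans ?_ (setIntegral_mono_set hconv ?_ hsub.eventuallyLE)
  · refine setIntegral_mono_on ((integrableOn_exp_neg_Ioi M).const_mul _)
      (hconv.mono_set hsub) measurableSet_Ioi fun x hx => ?_
    have hx : M < x := hx
    rw [mul_comm, add_sub_cancel_left]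
    gcongr
  · filter_upwards [ae_restrict_mem measurableSet_Ioi] with x hx
    have hx : 0 < x := hx
    simp only [Pi.zero_apply]
    positivity

lemma Gamma_one_add_natCast_mul_pos {α : ℝ} (hα : 0 < α) (k : ℕ) :
    0 < Real.Gamma (1 + k * α) := Real.Gamma_pos_of_pos (by positivity)

lemma summable_mittagLeffler {α : ℝ} (hα : 0 < α) (r : ℝ) :
    Summable fun k : ℕ => r ^ k / Real.Gamma (1 + k * α) := by
  set R := 2 * |r| + 1 with hR
  have hR0 : 0 < R := by positivity
  set M := R ^ α⁻¹ with hM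
  have hM0 : 0 < M := by positivity
  have hMα : M ^ α = R := by rw [hM, ← Real.rpow_mul hR0.le, inv_mul_cancel₀ hα.ne', Real.rpow_one]
  have hgeo : Summable fun k : ℕ => exp M * (|r| / R) ^ k := by
    refine (summable_geometric_of_lt_one (by positivity) ?_).mul_left _
    rw [div_lt_one hR0]
    have := abs_nonneg r
    linarith
  refine Summable.of_norm_bounded hgeo fun k => ?_
  have hΓ := Gamma_one_add_natCast_mul_pos hα k
  rw [norm_div, norm_pow, Real.norm_eq_abs, Real.norm_eq_abs, abs_of_pos hΓ, div_pow,
    div_le_iff₀ hΓ]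
  have h := rpow_mul_exp_neg_le_Gamma hM0 (y := k * α) (by positivity)
  have hpow : M ^ ((k : ℝ) * α) = R ^ k := by
    rw [mul_comm, Real.rpow_mul hM0.le, hMα, Real.rpow_natCast]
  rw [hpow] at h
  calc |r| ^ k = exp M * (|r| ^ k / R ^ k) * (R ^ k * exp (-M)) := by
        rw [Real.exp_neg]; field_simp
    _ ≤ _ := by gcongr

lemma hasSum_mittagLeffler {α : ℝ} (hα : 0 < α) (r : ℝ) :
    HasSum (fun k : ℕ => r ^ k / Real.Gamma (1 + k * α)) (mittagLeffler α r) :=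
  (summable_mittagLeffler hα r).hasSum

lemma mittagLeffler_zero (α : ℝ) : mittagLeffler α 0 = 1 := by
  rw [mittagLeffler, tsum_eq_single 0 (fun k hk => by simp [hk])]
  simp

lemma one_le_mittagLeffler {α r : ℝ} (hα : 0 < α) (hr : 0 ≤ r) : 1 ≤ mittagLeffler α r := by
  have h := (summable_mittagLeffler hα r).le_tsum 0 fun k _ =>
    div_nonneg (pow_nonneg hr k) (Gamma_one_add_natCast_mul_pos hα k).le
  simpa [mittagLeffler] using h

lemma exists_abs_mittagLeffler_sub_le {α : ℝ} (hα : 0 < α) (R : ℝ) :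
    ∃ L, 0 ≤ L ∧ ∀ x y, |x| ≤ R → |y| ≤ R →
      |mittagLeffler α x - mittagLeffler α y| ≤ L * |x - y| := by
  set S := |R| + 1 with hS
  have hS1 : 1 ≤ S := by have := abs_nonneg R; linarith
  have hsum := hasSum_mittagLeffler hα (2 * S)
  refine ⟨mittagLeffler α (2 * S), (zero_le_one.trans (one_le_mittagLeffler hα (by linarith))),
    fun x y hx hy => ?_⟩
  have hxS : |x| ≤ S := by have := le_abs_self R; linarith
  have hyS : |y| ≤ S := by have := le_abs_self R; linarith
  have hd := (hasSum_mittagLeffler hα x).sub (hasSum_mittagLeffler hα y)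
  rw [← hd.tsum_eq, ← Real.norm_eq_abs]
  refine tsum_of_norm_bounded (hsum.mul_right |x - y|) fun k => ?_
  have hΓ := Gamma_one_add_natCast_mul_pos hα k
  rw [← sub_div, norm_div, Real.norm_eq_abs, Real.norm_eq_abs, abs_of_pos hΓ, div_mul_eq_mul_div]
  gcongr
  calc |x ^ k - y ^ k| ≤ |x - y| * k * max |x| |y| ^ (k - 1) := abs_pow_sub_pow_le ..
    _ ≤ |x - y| * 2 ^ k * S ^ k := by
        gcongr
        · exact_mod_cast Nat.lt_two_pow_self.le
        · calc max |x| |y| ^ (k - 1) ≤ S ^ (k - 1) := by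
                gcongr
                exact max_le hxS hyS
            _ ≤ S ^ k := pow_le_pow_right₀ hS1 (Nat.sub_le k 1)
    _ = (2 * S) ^ k * |x - y| := by rw [mul_pow]; ring

lemma continuous_mittagLeffler {α : ℝ} (hα : 0 < α) : Continuous (mittagLeffler α) := by
  rw [continuous_iff_continuousAt]
  intro x
  obtain ⟨L, -, hL⟩ := exists_abs_mittagLeffler_sub_le hα (|x| + 1)
  refine ContinuousOn.continuousAt (s := Metric.closedBall 0 (|x| + 1)) ?_
    (Filter.mem_of_superset (Metric.ball_mem_nhds x one_pos) ?_)
  · refine (LipschitzOnWith.of_dist_le_mul (K := L.toNNReal) fun y hy z hz => ?_).continuousOn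
    rw [Real.dist_eq, Real.dist_eq]
    refine (hL y z (by simpa using hy) (by simpa using hz)).trans ?_
    gcongr
    exact Real.le_coe_toNNReal L
  · intro y hy
    rw [Metric.mem_ball, Real.dist_eq] at hy
    rw [mem_closedBall_zero_iff, Real.norm_eq_abs]
    have := abs_sub_abs_le_abs_sub y x
    linarith

lemma integral_rpow_mul_sub_rpow_s12 {p q t : ℝ} (hp : 0 < p) (hq : 0 < q) (ht : 0 < t) :
    ∫ s in (0 : ℝ)..t, s ^ (p - 1) * (t - s) ^ (q - 1) =
      t ^ (p + q - 1) * (Real.Gamma p * Real.Gamma q / Real.Gamma (p + q)) := by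
  have h := Complex.betaIntegral_scaled (p : ℂ) (q : ℂ) ht
  rw [Complex.betaIntegral_eq_Gamma_mul_div _ _ (by simpa) (by simpa)] at h
  apply Complex.ofReal_injective
  rw [← intervalIntegral.integral_ofReal]
  simp only [Complex.ofReal_mul, Complex.ofReal_div, ← Complex.Gamma_ofReal, Complex.ofReal_add]
  rw [Complex.ofReal_cpow ht.le]
  push_cast
  rw [← h]
  refine intervalIntegral.integral_congr fun s hs => ?_
  rw [uIcc_of_le ht.le] at hs
  have h2 : 0 ≤ t - s := by linarith [hs.2]
  rw [Complex.ofReal_cpow hs.1, Complex.ofReal_cpow h2]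
  push_cast
  rfl

lemma intervalIntegrable_sub_rpow {q : ℝ} (hq : -1 < q) (t a b : ℝ) :
    IntervalIntegrable (fun s => (t - s) ^ q) volume a b := by
  simpa using
    (intervalIntegral.intervalIntegrable_rpow' (a := t - a) (b := t - b) hq).comp_sub_left t

lemma integral_sub_rpow {q : ℝ} (hq : -1 < q) (t a : ℝ) :
    ∫ s in a..t, (t - s) ^ q = (t - a) ^ (q + 1) / (q + 1) := by
  rw [intervalIntegral.integral_comp_sub_left (fun x : ℝ => x ^ q) t, sub_self,
    integral_rpow (Or.inl hq), Real.zero_rpow (by linarith), sub_zero]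

/-- The Riemann–Liouville integral of `s ↦ E_α(-s^α)`, computed term by term. -/
lemma hasSum_integral_mittagLeffler_mul_sub_rpow {α q t : ℝ} (hα : 0 < α) (hq : 0 < q)
    (ht : 0 < t) :
    HasSum (fun k : ℕ => (-1) ^ k * t ^ (k * α + q) * Real.Gamma q / Real.Gamma (1 + k * α + q))
      (∫ s in (0 : ℝ)..t, mittagLeffler α (-s ^ α) * (t - s) ^ (q - 1)) := by
  have hK := intervalIntegrable_sub_rpow (q := q - 1) (by linarith) t 0 t
  have hterm (k : ℕ) : (-1) ^ k * t ^ (k * α + q) * Real.Gamma q / Real.Gamma (1 + k * α + q) =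
      ∫ s in (0 : ℝ)..t, (-s ^ α) ^ k / Real.Gamma (1 + k * α) * (t - s) ^ (q - 1) := by
    have hΓ := (Gamma_one_add_natCast_mul_pos hα k).ne'
    have hbeta := integral_rpow_mul_sub_rpow_s12 (p := 1 + k * α) (q := q) (by positivity) hq ht
    have hcongr : ∫ s in (0 : ℝ)..t, (-s ^ α) ^ k / Real.Gamma (1 + k * α) * (t - s) ^ (q - 1) =
        ∫ s in (0 : ℝ)..t, ((-1) ^ k / Real.Gamma (1 + k * α)) *
          (s ^ (1 + k * α - 1) * (t - s) ^ (q - 1)) := by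
      refine intervalIntegral.integral_congr fun s hs => ?_
      rw [uIcc_of_le ht.le] at hs
      have : s ^ (1 + k * α - 1) = (s ^ α) ^ k := by
        rw [add_sub_cancel_left, mul_comm, Real.rpow_mul hs.1, Real.rpow_natCast]
      simp only [this]
      rw [neg_pow]
      ring
    rw [hcongr, intervalIntegral.integral_const_mul, hbeta]
    rw [show 1 + k * α + q - 1 = k * α + q by ring]
    field_simp
  simp_rw [hterm]
  have hsum := summable_mittagLeffler hα (t ^ α)
  refine intervalIntegral.hasSum_integral_of_dominated_convergence
    (fun k s => (t ^ α) ^ k / Real.Gamma (1 + k * α) * |(t - s) ^ (q - 1)|) (fun k => ?_)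
    (fun k => ?_) ?_ ?_ ?_
  · exact (Measurable.mul (by fun_prop) (by fun_prop)).aestronglyMeasurable
  · refine Filter.Eventually.of_forall fun s hs => ?_
    rw [uIoc_of_le ht.le] at hs
    have hΓ := Gamma_one_add_natCast_mul_pos hα k
    have hs0 : 0 ≤ s ^ α := Real.rpow_nonneg hs.1.le α
    rw [norm_mul, norm_div, norm_pow, norm_neg, Real.norm_of_nonneg hs0, Real.norm_of_nonneg hΓ.le,
      Real.norm_eq_abs]
    have := hs.1.le
    have := hs.2
    gcongr
  · exact Filter.Eventually.of_forall fun s _ => hsum.mul_right _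
  · simp_rw [tsum_mul_right]
    exact hK.abs.const_mul _
  · exact Filter.Eventually.of_forall fun s _ => (hasSum_mittagLeffler hα _).mul_right _

/-- The integrated form of the relaxation equation `∂_t^α u = -u`, `u(0) = 1`, for
`u(s) = E_α(-s^α)`. -/
lemma integral_mittagLeffler_mul_sub_rpow_neg {α t : ℝ} (hα : 0 < α) (hα1 : α < 1) (ht : 0 < t) :
    ∫ s in (0 : ℝ)..t, mittagLeffler α (-s ^ α) * (t - s) ^ (-α) =
      t ^ (1 - α) / (1 - α) - Real.Gamma (1 - α) * ∫ s in (0 : ℝ)..t, mittagLeffler α (-s ^ α) := by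
  have h1α : 0 < 1 - α := by linarith
  have h1 := hasSum_integral_mittagLeffler_mul_sub_rpow hα h1α ht
  have h2 := hasSum_integral_mittagLeffler_mul_sub_rpow hα one_pos ht
  simp only [sub_self, Real.rpow_zero, mul_one, Real.Gamma_one] at h2
  rw [show 1 - α - 1 = -α by ring] at h1
  rw [← hasSum_nat_add_iff' 1] at h1
  have h3 := h2.mul_left (-Real.Gamma (1 - α))
  have heq := h1.unique (by
    refine h3.congr_fun fun k => ?_
    push_cast
    rw [show ((k : ℝ) + 1) * α + (1 - α) = k * α + 1 by ring,
      show 1 + ((k : ℝ) + 1) * α + (1 - α) = 1 + k * α + 1 by ring]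
    ring)
  have hΓ : Real.Gamma (1 + (1 - α)) = (1 - α) * Real.Gamma (1 - α) := by
    rw [add_comm, Real.Gamma_add_one h1α.ne']
  have hΓ0 := (Real.Gamma_pos_of_pos h1α).ne'
  simp only [Finset.sum_range_one, pow_zero, Nat.cast_zero, zero_mul, zero_add, add_zero, one_mul,
    hΓ] at heq
  rw [show t ^ (1 - α) * Real.Gamma (1 - α) / ((1 - α) * Real.Gamma (1 - α)) =
    t ^ (1 - α) / (1 - α) by field_simp] at heq
  linarith

lemma continuous_mittagLeffler_neg_rpow {α : ℝ} (hα : 0 < α) :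
    Continuous fun s : ℝ => mittagLeffler α (-s ^ α) :=
  (continuous_mittagLeffler hα).comp (Real.continuous_rpow_const hα.le).neg

lemma exists_mittagLeffler_neg_rpow_sub_le {α t : ℝ} (hα : 0 < α) (hα1 : α < 1) (ht : 0 < t) :
    ∃ L, 0 ≤ L ∧ ∀ s ∈ Icc 0 t,
      mittagLeffler α (-s ^ α) - mittagLeffler α (-t ^ α) ≤ L * (t - s) := by
  obtain ⟨L, hL0, hL⟩ := exists_abs_mittagLeffler_sub_le hα (t ^ α)
  refine ⟨L * (t ^ α / t), by positivity, fun s hs => ?_⟩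
  have hsα : s ^ α ≤ t ^ α := Real.rpow_le_rpow hs.1 hs.2 hα.le
  have hsα0 : 0 ≤ s ^ α := Real.rpow_nonneg hs.1 α
  refine (le_abs_self _).trans ((hL _ _ ?_ ?_).trans ?_)
  · rwa [abs_neg, abs_of_nonneg hsα0]
  · rw [abs_neg, abs_of_nonneg (hsα0.trans hsα)]
  · rw [mul_assoc]
    gcongr
    rw [show -s ^ α - -t ^ α = t ^ α - s ^ α by ring, abs_of_nonneg (by linarith)]
    have hst : s / t ≤ (s / t) ^ α :=
      Real.self_le_rpow_of_le_one (div_nonneg hs.1 ht.le) ((div_le_one ht).2 hs.2) hα1.le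
    rw [Real.div_rpow hs.1 ht.le, le_div_iff₀ (by positivity)] at hst
    calc t ^ α - s ^ α ≤ t ^ α - s / t * t ^ α := by linarith
      _ = t ^ α / t * (t - s) := by field_simp

/-- Concavity of `x ↦ x ^ p` for `p ∈ [0, 1]`, through the tangent line at `t`. -/
lemma sub_rpow_le_rpow_sub {p t h : ℝ} (hp0 : 0 ≤ p) (hp1 : p ≤ 1) (ht : 0 < t) (hh : h ≤ t) :
    (t - h) ^ p ≤ t ^ p - p * t ^ (p - 1) * h := by
  have hb := rpow_one_add_le_one_add_mul_self (s := -(h / t))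
    (by rw [neg_le_neg_iff]; exact (div_le_one ht).2 hh) hp0 hp1
  have hdiv : 0 ≤ 1 + -(h / t) := by
    have := (div_le_one ht).2 hh
    linarith
  calc (t - h) ^ p = t ^ p * (1 + -(h / t)) ^ p := by
        rw [← Real.mul_rpow ht.le hdiv]; congr 1; field_simp; ring
    _ ≤ t ^ p * (1 + p * -(h / t)) := by gcongr
    _ = t ^ p - p * t ^ (p - 1) * h := by
        rw [Real.rpow_sub_one ht.ne']; ring

/-- At a running minimum `t` of a continuous function `u` which is one-sided Lipschitz there, the
increments of the fractional integral of `u` are controlled by those of the constant `u t`. -/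
lemma integral_mul_sub_rpow_neg_sub_le {α t h L : ℝ} {u : ℝ → ℝ} (hα : 0 < α) (hα1 : α < 1)
    (hh : 0 < h) (hht : h < t) (hu : Continuous u) (hL0 : 0 ≤ L)
    (hmin : ∀ s ∈ Icc 0 t, u t ≤ u s) (hL : ∀ s ∈ Icc 0 t, u s - u t ≤ L * (t - s)) :
    (∫ s in (0 : ℝ)..t, u s * (t - s) ^ (-α)) -
        (∫ s in (0 : ℝ)..(t - h), u s * (t - h - s) ^ (-α)) ≤
      u t * ((t ^ (1 - α) - (t - h) ^ (1 - α)) / (1 - α)) + L * h * (h ^ (1 - α) / (1 - α)) := by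
  have hint (c : ℝ → ℝ) (hc : Continuous c) (x a b : ℝ) :
      IntervalIntegrable (fun s => c s * (x - s) ^ (-α)) volume a b :=
    (intervalIntegrable_sub_rpow (by linarith) x a b).continuousOn_mul hc.continuousOn
  have hneg : -1 < -α := by linarith
  have hexp : -α + 1 = 1 - α := by ring
  have hconst (x a : ℝ) : ∫ s in a..x, u t * (x - s) ^ (-α) =
      u t * ((x - a) ^ (1 - α) / (1 - α)) := by
    rw [intervalIntegral.integral_const_mul, integral_sub_rpow hneg, hexp]
  have hsplit (c : ℝ → ℝ) (hc : Continuous c) := intervalIntegral.integral_add_adjacent_intervals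
    (hint c hc t 0 (t - h)) (hint c hc t (t - h) t)
  have hfirst : (∫ s in (0 : ℝ)..(t - h), u s * (t - s) ^ (-α)) -
      (∫ s in (0 : ℝ)..(t - h), u s * (t - h - s) ^ (-α)) ≤
      (∫ s in (0 : ℝ)..(t - h), u t * (t - s) ^ (-α)) -
      (∫ s in (0 : ℝ)..(t - h), u t * (t - h - s) ^ (-α)) := by
    have hut : Continuous fun _ : ℝ => u t := continuous_const
    rw [← intervalIntegral.integral_sub (hint u hu ..) (hint u hu ..),
      ← intervalIntegral.integral_sub (hint _ hut ..) (hint _ hut ..)]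
    refine intervalIntegral.integral_mono_on_of_le_Ioo (by linarith)
      ((hint u hu ..).sub (hint u hu ..)) ((hint _ hut ..).sub (hint _ hut ..)) fun s hs => ?_
    have hker : (t - s) ^ (-α) ≤ (t - h - s) ^ (-α) :=
      Real.rpow_le_rpow_of_nonpos (by linarith [hs.2]) (by linarith) (by linarith)
    have hus := hmin s ⟨hs.1.le, by linarith [hs.2]⟩
    nlinarith
  have hsecond : ∫ s in (t - h)..t, u s * (t - s) ^ (-α) ≤
      (∫ s in (t - h)..t, u t * (t - s) ^ (-α)) + L * h * (h ^ (1 - α) / (1 - α)) := by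
    have hlast : ∫ s in (t - h)..t, L * h * (t - s) ^ (-α) = L * h * (h ^ (1 - α) / (1 - α)) := by
      rw [intervalIntegral.integral_const_mul, integral_sub_rpow hneg, hexp, sub_sub_cancel]
    rw [← hlast, ← intervalIntegral.integral_add (hint _ continuous_const ..)
      (hint _ continuous_const ..)]
    refine intervalIntegral.integral_mono_on (by linarith) (hint u hu ..)
      ((hint _ continuous_const ..).add (hint _ continuous_const ..)) fun s hs => ?_
    rw [← add_mul]
    have hs0 : 0 ≤ t - s := by linarith [hs.2]
    have hLs : L * (t - s) ≤ L * h := by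
      gcongr
      linarith [hs.1]
    gcongr
    linarith [hL s ⟨by linarith [hs.1], hs.2⟩]
  have hu_split := hsplit u hu
  have hc_split := hsplit (fun _ => u t) continuous_const
  have hc1 := hconst t 0
  have hc2 := hconst (t - h) 0
  rw [sub_zero] at hc1 hc2
  have hring : u t * ((t ^ (1 - α) - (t - h) ^ (1 - α)) / (1 - α)) =
      u t * (t ^ (1 - α) / (1 - α)) - u t * ((t - h) ^ (1 - α) / (1 - α)) := by ring
  linarith

lemma one_sub_mul_rpow_neg_le_of_isMin {α t : ℝ} (hα : 0 < α) (hα1 : α < 1) (ht : 0 < t)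
    (hmin : ∀ s ∈ Icc 0 t, mittagLeffler α (-t ^ α) ≤ mittagLeffler α (-s ^ α)) :
    (1 - mittagLeffler α (-t ^ α)) * t ^ (-α) ≤
      Real.Gamma (1 - α) * mittagLeffler α (-t ^ α) := by
  have h1α : 0 < 1 - α := by linarith
  have hΓ := Real.Gamma_pos_of_pos h1α
  obtain ⟨L, hL0, hL⟩ := exists_mittagLeffler_neg_rpow_sub_le hα hα1 ht
  have hu := continuous_mittagLeffler_neg_rpow hα
  have hm1 : mittagLeffler α (-t ^ α) ≤ 1 := by
    simpa [Real.zero_rpow hα.ne', mittagLeffler_zero] using hmin 0 ⟨le_rfl, ht.le⟩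
  set m := mittagLeffler α (-t ^ α) with hm
  have hbound (h : ℝ) (hh : h ∈ Ioo 0 t) : (1 - m) * t ^ (-α) ≤
      Real.Gamma (1 - α) * (m + L * h) + L * (h ^ (1 - α) / (1 - α)) := by
    obtain ⟨hh, hht⟩ := hh
    have hinc := integral_mul_sub_rpow_neg_sub_le hα hα1 hh hht hu hL0 hmin hL
    rw [integral_mittagLeffler_mul_sub_rpow_neg hα hα1 ht,
      integral_mittagLeffler_mul_sub_rpow_neg hα hα1 (sub_pos.2 hht), ← hm] at hinc
    have hadj := intervalIntegral.integral_add_adjacent_intervals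
      (hu.intervalIntegrable (μ := volume) 0 (t - h)) (hu.intervalIntegrable (t - h) t)
    have hle : ∫ s in (t - h)..t, mittagLeffler α (-s ^ α) ≤ h * (m + L * h) := by
      have hmono := intervalIntegral.integral_mono_on (μ := volume) (by linarith : t - h ≤ t)
        (hu.intervalIntegrable _ _)
        (continuous_const.intervalIntegrable (u := fun _ : ℝ => m + L * h) _ _) fun s hs => by
          have hLs : L * (t - s) ≤ L * h := by
            gcongr
            linarith [hs.1]
          linarith [hL s ⟨by linarith [hs.1], hs.2⟩]
      rwa [intervalIntegral.integral_const, smul_eq_mul, sub_sub_cancel] at hmono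
    have hconc : t ^ (-α) * h ≤ (t ^ (1 - α) - (t - h) ^ (1 - α)) / (1 - α) := by
      have := sub_rpow_le_rpow_sub h1α.le (by linarith) ht hht.le
      rw [show 1 - α - 1 = -α by ring] at this
      rw [le_div_iff₀ h1α]
      linarith
    have hconc' := mul_le_mul_of_nonneg_left hconc (sub_nonneg.2 hm1)
    have hle' := mul_le_mul_of_nonneg_left hle hΓ.le
    refine le_of_mul_le_mul_left ?_ hh
    rw [← hadj] at hinc
    have hring : (t ^ (1 - α) - (t - h) ^ (1 - α)) / (1 - α) =
      t ^ (1 - α) / (1 - α) - (t - h) ^ (1 - α) / (1 - α) := by ring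
    nlinarith
  have hlim : Filter.Tendsto (fun h : ℝ =>
      Real.Gamma (1 - α) * (m + L * h) + L * (h ^ (1 - α) / (1 - α)))
      (nhdsWithin 0 (Ioi 0)) (nhds (Real.Gamma (1 - α) * m)) := by
    have hc : Continuous fun h : ℝ =>
        Real.Gamma (1 - α) * (m + L * h) + L * (h ^ (1 - α) / (1 - α)) := by
      have := Real.continuous_rpow_const h1α.le
      fun_prop
    have := (hc.tendsto 0).mono_left (nhdsWithin_le_nhds (s := Ioi 0))
    simpa [Real.zero_rpow h1α.ne'] using this
  refine ge_of_tendsto hlim ?_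
  filter_upwards [Ioo_mem_nhdsGT ht] with h hh using hbound h hh

lemma inv_le_mittagLeffler_neg_rpow {α T : ℝ} (hα : 0 < α) (hα1 : α < 1) (hT : 0 ≤ T) :
    (1 + Real.Gamma (1 - α) * T ^ α)⁻¹ ≤ mittagLeffler α (-T ^ α) := by
  have hΓ := Real.Gamma_pos_of_pos (sub_pos.2 hα1)
  obtain ⟨t, ht, hmin⟩ := isCompact_Icc.exists_isMinOn (nonempty_Icc.2 hT)
    (continuous_mittagLeffler_neg_rpow hα).continuousOn
  have hmin (s : ℝ) (hs : s ∈ Icc 0 T) := isMinOn_iff.1 hmin s hs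
  refine le_trans ?_ (hmin T ⟨hT, le_rfl⟩)
  have hden : 0 < 1 + Real.Gamma (1 - α) * t ^ α := by
    have := Real.rpow_nonneg ht.1 α
    positivity
  have hmono : (1 + Real.Gamma (1 - α) * T ^ α)⁻¹ ≤ (1 + Real.Gamma (1 - α) * t ^ α)⁻¹ := by
    have := ht.1
    have := ht.2
    gcongr
  refine hmono.trans ?_
  rcases ht.1.eq_or_lt with rfl | ht0
  · simp [Real.zero_rpow hα.ne', mittagLeffler_zero]
  · have h := one_sub_mul_rpow_neg_le_of_isMin hα hα1 ht0
      fun s hs => hmin s ⟨hs.1, hs.2.trans ht.2⟩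
    rw [Real.rpow_neg ht0.le, ← div_eq_mul_inv, div_le_iff₀ (by positivity)] at h
    rw [inv_le_iff_one_le_mul₀ hden]
    linarith

/-- The lower bound `E_α(-x) ≥ 1 / (1 + Γ(1-α) x)` for `0 < α < 1` and `x ≥ 0`. -/
lemma inv_le_mittagLeffler_neg {α x : ℝ} (hα : 0 < α) (hα1 : α < 1) (hx : 0 ≤ x) :
    (1 + Real.Gamma (1 - α) * x)⁻¹ ≤ mittagLeffler α (-x) := by
  have h := inv_le_mittagLeffler_neg_rpow hα hα1 (Real.rpow_nonneg hx α⁻¹)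
  rwa [Real.rpow_inv_rpow hx hα.ne'] at h

lemma not_integrable_inv_one_add_mul_norm_sq {E : Type*} [NormedAddCommGroup E]
    [NormedSpace ℝ E] [FiniteDimensional ℝ E] [MeasurableSpace E] [BorelSpace E]
    (μ : Measure E) [μ.IsAddHaarMeasure] (hE : 2 ≤ Module.finrank ℝ E) {K : ℝ} (hK : 0 ≤ K) :
    ¬ Integrable (fun x : E => (1 + K * ‖x‖ ^ 2)⁻¹) μ := by
  have : Nontrivial E := Module.nontrivial_of_finrank_pos (R := ℝ) (by omega)
  intro h
  rw [integrable_fun_norm_addHaar μ (f := fun y => (1 + K * y ^ 2)⁻¹)] at h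
  refine not_integrableOn_Ioi_inv (a := 1) ?_
  refine ((h.mono_set (Ioi_subset_Ioi zero_le_one)).const_mul (1 + K)).mono'
    measurable_inv.aestronglyMeasurable ?_
  filter_upwards [ae_restrict_mem measurableSet_Ioi] with y hy
  have hy : 1 < y := hy
  have hy0 : 0 < y := by linarith
  have hpow : y ≤ y ^ (Module.finrank ℝ E - 1) := le_self_pow₀ hy.le (by omega)
  rw [Real.norm_of_nonneg (by positivity), smul_eq_mul, ← div_eq_mul_inv, mul_div_assoc',
    inv_eq_one_div, div_le_div_iff₀ hy0 (by positivity)]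
  nlinarith [mul_le_mul_of_nonneg_left hpow (by positivity : 0 ≤ (1 + K) * y)]

theorem fourier_fundamental_solution_integral_top
    (α t a d : ℝ) (hα : 0 < α) (hα1 : α < 1) (ht : 0 < t) (ha : 0 ≤ a) (hd : 0 < d)
    (N : ℕ) (hN : N = 2 ∨ N = 3) :
    (∀ ξ : EuclideanSpace ℝ (Fin N),
        0 < mittagLeffler α ((a - 4 * π ^ 2 * d * ‖ξ‖ ^ 2) * t ^ α)) ∧
    (∫⁻ ξ : EuclideanSpace ℝ (Fin N),
        ENNReal.ofReal (mittagLeffler α ((a - 4 * π ^ 2 * d * ‖ξ‖ ^ 2) * t ^ α)) = ⊤) ∧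
    ¬ Integrable (fun ξ : EuclideanSpace ℝ (Fin N) =>
        mittagLeffler α ((a - 4 * π ^ 2 * d * ‖ξ‖ ^ 2) * t ^ α))
      (volume : Measure (EuclideanSpace ℝ (Fin N))) := by
  have hΓ := Real.Gamma_pos_of_pos (sub_pos.2 hα1)
  have htα : 0 < t ^ α := Real.rpow_pos_of_pos ht α
  set K := Real.Gamma (1 - α) * (4 * π ^ 2 * d * t ^ α) with hKdef
  have hK : 0 ≤ K := by positivity
  have hlow (ξ : EuclideanSpace ℝ (Fin N)) : (1 + K * ‖ξ‖ ^ 2)⁻¹ ≤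
      mittagLeffler α ((a - 4 * π ^ 2 * d * ‖ξ‖ ^ 2) * t ^ α) := by
    rcases le_total 0 ((a - 4 * π ^ 2 * d * ‖ξ‖ ^ 2) * t ^ α) with hr | hr
    · refine (inv_le_one_of_one_le₀ ?_).trans (one_le_mittagLeffler hα hr)
      have : 0 ≤ K * ‖ξ‖ ^ 2 := by positivity
      linarith
    · have h := inv_le_mittagLeffler_neg hα hα1 (neg_nonneg.2 hr)
      rw [neg_neg] at h
      refine le_trans ?_ h
      have hle : -((a - 4 * π ^ 2 * d * ‖ξ‖ ^ 2) * t ^ α) ≤ 4 * π ^ 2 * d * t ^ α * ‖ξ‖ ^ 2 := by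
        nlinarith [mul_nonneg ha htα.le]
      rw [hKdef, mul_assoc]
      have := neg_nonneg.2 hr
      gcongr
  have hnot : ¬ Integrable (fun ξ : EuclideanSpace ℝ (Fin N) =>
      mittagLeffler α ((a - 4 * π ^ 2 * d * ‖ξ‖ ^ 2) * t ^ α)) := by
    intro h
    refine not_integrable_inv_one_add_mul_norm_sq
      (volume : Measure (EuclideanSpace ℝ (Fin N))) (by simp; omega) hK ?_
    refine h.mono' (Measurable.aestronglyMeasurable (by fun_prop)) ?_
    refine Filter.Eventually.of_forall fun ξ => ?_
    rw [Real.norm_of_nonneg (by positivity)]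
    exact hlow ξ
  have hpos (ξ : EuclideanSpace ℝ (Fin N)) :
      0 < mittagLeffler α ((a - 4 * π ^ 2 * d * ‖ξ‖ ^ 2) * t ^ α) :=
    lt_of_lt_of_le (by positivity) (hlow ξ)
  refine ⟨hpos, ?_, hnot⟩
  by_contra hfin
  have hcont : Continuous fun ξ : EuclideanSpace ℝ (Fin N) =>
      mittagLeffler α ((a - 4 * π ^ 2 * d * ‖ξ‖ ^ 2) * t ^ α) :=
    (continuous_mittagLeffler hα).comp (by fun_prop)
  exact hnot ((lintegral_ofReal_ne_top_iff_integrable hcont.aestronglyMeasurable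
    (Filter.Eventually.of_forall fun ξ => (hpos ξ).le)).1 hfin)
end
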